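/- For every finite MDP with discount factor γ ∈ [0,1), every β ∈ ℝ, every x ∈ (0,∞) and every y ∈ ℝ, the normalized softmax likelihood is invariant under the affine reward transformation: π^•_{xR+y}(a|s) = π^•_R(a|s) for all s ∈ S, a ∈ A. -/

import Mathlib

/-!
The Bellman optimality operator commutes with increasing affine maps: applied to `x * Q + c` with
reward `x * r + y` it returns `x * B Q + (y + γ * c)`. For `c = y / (1 - γ)` the constant is
reproduced, so `x * Q* + c` is a fixed point for the transformed reward. The operator is a
contraction, hence this is the only fixed point, and min-max normalization removes both `x`
and `c`.
-/

open Finset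
open scoped Classical

section FiniteFamilies

variable {ι K : Type*}

lemma sup'_mul_add [Semiring K] [LinearOrder K] [IsOrderedRing K] {s : Finset ι}
    (hs : s.Nonempty) {x : K} (hx : 0 ≤ x) (f : ι → K) (c : K) :
    s.sup' hs (fun i => x * f i + c) = x * s.sup' hs f + c :=
  (apply_sup'_eq_sup'_comp hs (x * · + c)
    ((monotone_mul_left_of_nonneg hx).add_const c).map_sup).symm

lemma inf'_mul_add [Semiring K] [LinearOrder K] [IsOrderedRing K] {s : Finset ι}
    (hs : s.Nonempty) {x : K} (hx : 0 ≤ x) (f : ι → K) (c : K) :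
    s.inf' hs (fun i => x * f i + c) = x * s.inf' hs f + c :=
  (apply_inf'_eq_inf'_comp hs (x * · + c)
    ((monotone_mul_left_of_nonneg hx).add_const c).map_inf).symm

lemma sup'_le_sup'_add [Add K] [LinearOrder K] [AddRightMono K] {s : Finset ι}
    (hs : s.Nonempty) {f g : ι → K} {M : K} (h : ∀ i ∈ s, f i ≤ g i + M) :
    s.sup' hs f ≤ s.sup' hs g + M :=
  sup'_le hs f fun i hi => (h i hi).trans (add_le_add_left (le_sup' g hi) M)

lemma abs_sup'_sub_sup'_le [AddCommGroup K] [LinearOrder K] [IsOrderedAddMonoid K]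
    {s : Finset ι} (hs : s.Nonempty) {f g : ι → K} {M : K} (h : ∀ i ∈ s, |f i - g i| ≤ M) :
    |s.sup' hs f - s.sup' hs g| ≤ M := by
  simp only [abs_sub_le_iff, sub_le_iff_le_add'] at h ⊢
  exact ⟨sup'_le_sup'_add hs fun i hi => (h i hi).1, sup'_le_sup'_add hs fun i hi => (h i hi).2⟩

lemma abs_sum_mul_sub_sum_mul_le [Fintype ι] [Field K] [LinearOrder K] [IsStrictOrderedRing K]
    {w : ι → K} (hw : w ∈ stdSimplex K ι) {f g : ι → K} {M : K} (h : ∀ i, |f i - g i| ≤ M) :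
    |∑ i, w i * f i - ∑ i, w i * g i| ≤ M := by
  have hmem : ∑ i, w i • (f i - g i) ∈ Set.Icc (-M) M :=
    (convex_Icc (-M) M).sum_mem (fun i _ => hw.1 i) hw.2 fun i _ => abs_le.1 (h i)
  simpa only [smul_eq_mul, mul_sub, sum_sub_distrib] using abs_le.2 hmem

lemma sum_mul_mul_add [Fintype ι] [CommSemiring K] {w : ι → K} (hw : ∑ i, w i = 1)
    (x c : K) (f : ι → K) :
    ∑ i, w i * (x * f i + c) = x * ∑ i, w i * f i + c := by
  simp only [mul_add, sum_add_distrib, ← sum_mul, hw, one_mul, mul_left_comm _ x, ← mul_sum]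

end FiniteFamilies

section Bellman

variable {S A : Type*} [Fintype S] [Fintype A] [Nonempty A]

/-- The Bellman optimality operator on state-action value functions, for the transition kernel
`T` (`T s a s'` is the probability of moving from `s` to `s'` under `a`), a reward `r` that may
depend on the action, and discount factor `γ`. -/
def bellmanOperator (T : S → A → S → ℝ) (r : S → A → ℝ) (γ : ℝ) (Q : S → A → ℝ) :
    S → A → ℝ :=
  fun s a => r s a + γ * ∑ s', T s a s' * univ.sup' univ_nonempty (Q s')

variable {T : S → A → S → ℝ} (r : S → A → ℝ)

lemma lipschitzWith_bellmanOperator (hT : ∀ s a, T s a ∈ stdSimplex ℝ S) (γ : ℝ) :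
    LipschitzWith ‖γ‖₊ (bellmanOperator T r γ) := by
  refine LipschitzWith.of_dist_le_mul fun P Q => ?_
  have hmax (s : S) :
      |univ.sup' univ_nonempty (P s) - univ.sup' univ_nonempty (Q s)| ≤ dist P Q :=
    abs_sup'_sub_sup'_le univ_nonempty fun a _ =>
      (dist_le_pi_dist (P s) (Q s) a).trans (dist_le_pi_dist P Q s)
  refine (dist_pi_le_iff (by positivity)).2 fun s => (dist_pi_le_iff (by positivity)).2 fun a => ?_
  rw [bellmanOperator, bellmanOperator, dist_add_left, Real.dist_eq, ← mul_sub, abs_mul,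
    coe_nnnorm, Real.norm_eq_abs]
  gcongr
  exact abs_sum_mul_sub_sum_mul_le (hT s a) hmax

lemma contractingWith_bellmanOperator (hT : ∀ s a, T s a ∈ stdSimplex ℝ S) {γ : ℝ}
    (hγ : |γ| < 1) : ContractingWith ‖γ‖₊ (bellmanOperator T r γ) :=
  ⟨hγ, lipschitzWith_bellmanOperator r hT γ⟩

lemma bellmanOperator_mul_add (hT : ∀ s a, ∑ s', T s a s' = 1) (γ : ℝ) {x : ℝ} (hx : 0 ≤ x)
    (y c : ℝ) (Q : S → A → ℝ) :
    bellmanOperator T (fun s a => x * r s a + y) γ (fun s a => x * Q s a + c) =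
      fun s a => x * bellmanOperator T r γ Q s a + (y + γ * c) := by
  funext s a
  simp only [bellmanOperator, sup'_mul_add univ_nonempty hx, sum_mul_mul_add (hT s a)]
  ring

variable {r}

lemma isFixedPt_bellmanOperator_mul_add (hT : ∀ s a, ∑ s', T s a s' = 1) {γ : ℝ} (hγ : γ ≠ 1)
    {x : ℝ} (hx : 0 ≤ x) (y : ℝ) {Q : S → A → ℝ}
    (hQ : Function.IsFixedPt (bellmanOperator T r γ) Q) :
    Function.IsFixedPt (bellmanOperator T (fun s a => x * r s a + y) γ)
      (fun s a => x * Q s a + y / (1 - γ)) := by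
  have hconst : y + γ * (y / (1 - γ)) = y / (1 - γ) := by
    have : 1 - γ ≠ 0 := sub_ne_zero.2 hγ.symm
    field_simp
    ring
  rw [Function.IsFixedPt, bellmanOperator_mul_add r hT γ hx, hQ.eq, hconst]

lemma eq_mul_add_of_isFixedPt_bellmanOperator (hT : ∀ s a, T s a ∈ stdSimplex ℝ S) {γ : ℝ}
    (hγ : |γ| < 1) {x : ℝ} (hx : 0 ≤ x) {y : ℝ} {Q Q' : S → A → ℝ}
    (hQ : Function.IsFixedPt (bellmanOperator T r γ) Q)
    (hQ' : Function.IsFixedPt (bellmanOperator T (fun s a => x * r s a + y) γ) Q') :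
    Q' = fun s a => x * Q s a + y / (1 - γ) :=
  (contractingWith_bellmanOperator _ hT hγ).fixedPoint_unique' hQ'
    (isFixedPt_bellmanOperator_mul_add (fun s a => (hT s a).2) (abs_lt.1 hγ).2.ne hx y hQ)

end Bellman

section Normalization

variable {A : Type*} [Fintype A]

/-- The affine rescaling of `f` to minimum `0` and maximum `1`, giving the normalized value
function `Q^•` when applied to `Q* s`; a constant `f`, for which there is no such rescaling, is
sent to the constant `ε`. -/
noncomputable def minMaxNormalize [Nonempty A] (ε : ℝ) (f : A → ℝ) : A → ℝ :=
  fun a =>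
    if ∃ a₁ a₂ : A, f a₁ ≠ f a₂ then
      (f a - univ.inf' univ_nonempty f) /
        (univ.sup' univ_nonempty f - univ.inf' univ_nonempty f)
    else ε

lemma minMaxNormalize_mul_add [Nonempty A] (ε : ℝ) {x : ℝ} (hx : 0 < x) (f : A → ℝ) (c : ℝ) :
    minMaxNormalize ε (fun a => x * f a + c) = minMaxNormalize ε f := by
  funext a
  simp only [minMaxNormalize, sup'_mul_add univ_nonempty hx.le, inf'_mul_add univ_nonempty hx.le,
    add_sub_add_right_eq_sub, ← mul_sub, mul_div_mul_left _ _ hx.ne', ne_eq, add_left_inj,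
    mul_right_inj' hx.ne']

/-- The softmax distribution on actions with scores `f` and inverse temperature `β`. -/
noncomputable def softmax (β : ℝ) (f : A → ℝ) : A → ℝ :=
  fun a => Real.exp (β * f a) / ∑ a', Real.exp (β * f a')

end Normalization

theorem normalized_softmax_affine_invariance_general {S A : Type*} [Fintype S] [Fintype A]
    [Nonempty A] {T : S → A → S → ℝ} (hT : ∀ s a, T s a ∈ stdSimplex ℝ S) {r : S → A → ℝ}
    {γ : ℝ} (hγ : |γ| < 1) {x y : ℝ} (hx : 0 < x) {Q Q' : S → A → ℝ}
    (hQ : Function.IsFixedPt (bellmanOperator T r γ) Q)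
    (hQ' : Function.IsFixedPt (bellmanOperator T (fun s a => x * r s a + y) γ) Q')
    (β ε : ℝ) (s : S) :
    softmax β (minMaxNormalize ε (Q' s)) = softmax β (minMaxNormalize ε (Q s)) := by
  rw [eq_mul_add_of_isFixedPt_bellmanOperator hT hγ hx.le hQ hQ', minMaxNormalize_mul_add ε hx]

/-- the normalized softmax likelihood `π^•` is invariant under the affine
reward transformation `R ↦ xR + y`: `π^•_{xR+y}(a|s) = π^•_R(a|s)` for all s, a.
Here `Q^•` is the min-max normalization of `Q*` at states where `Q*(s,·)` is
non-constant, and the fixed constant ε ∈ (0,1] otherwise. -/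
theorem normalized_softmax_affine_invariance {S A : Type*} [Fintype S] [Fintype A]
    [Nonempty S] [Nonempty A]
    (T : S → A → S → ℝ) (hT0 : ∀ s a s', 0 ≤ T s a s') (hT1 : ∀ s a, ∑ s', T s a s' = 1)
    (R : S → ℝ) (γ : ℝ) (hγ0 : 0 ≤ γ) (hγ1 : γ < 1)
    (β : ℝ) (x y : ℝ) (hx : 0 < x)
    (ε : ℝ) (hε0 : 0 < ε) (hε1 : ε ≤ 1)
    (Q Qxy : S → A → ℝ)
    (hQ : ∀ s a, Q s a = R s + γ * ∑ s', T s a s' * univ.sup' univ_nonempty (Q s'))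
    (hQxy : ∀ s a, Qxy s a =
      (x * R s + y) + γ * ∑ s', T s a s' * univ.sup' univ_nonempty (Qxy s'))
    (QbR QbXY : S → A → ℝ)
    (hQbR : ∀ s a, QbR s a =
      if ∃ a1 a2 : A, Q s a1 ≠ Q s a2 then
        (Q s a - univ.inf' univ_nonempty (Q s)) /
          (univ.sup' univ_nonempty (Q s) - univ.inf' univ_nonempty (Q s))
      else ε)
    (hQbXY : ∀ s a, QbXY s a =
      if ∃ a1 a2 : A, Qxy s a1 ≠ Qxy s a2 then
        (Qxy s a - univ.inf' univ_nonempty (Qxy s)) /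
          (univ.sup' univ_nonempty (Qxy s) - univ.inf' univ_nonempty (Qxy s))
      else ε) :
    ∀ s a, Real.exp (β * QbXY s a) / (∑ a', Real.exp (β * QbXY s a')) =
      Real.exp (β * QbR s a) / (∑ a', Real.exp (β * QbR s a')) := by
  obtain rfl : QbR = fun s => minMaxNormalize ε (Q s) := funext₂ hQbR
  obtain rfl : QbXY = fun s => minMaxNormalize ε (Qxy s) := funext₂ hQbXY
  exact fun s => congrFun <| normalized_softmax_affine_invariance_general
    (fun s a => ⟨hT0 s a, hT1 s a⟩) (abs_lt.2 ⟨by linarith, hγ1⟩) hx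
    (r := fun s _ => R s) (funext₂ fun s a => (hQ s a).symm)
    (funext₂ fun s a => (hQxy s a).symm) β ε s
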